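/- Let β > 0 and let m ≥ 1 be an integer. There exists K > 0 depending only on m and β such that for all integers n ≥ 1, |E[Σ_{1≤a<b<c≤n} m(a,b)·m(b,c)] − m²·n| ≤ K · n^{2/(2+β)}. -/

import Mathlib

open Finset

/-- A parent sequence of length `N`: for each `t ∈ {2,…,N}` an index `f t ∈ {1,…,t-1}`. -/
def ParentSeq (N : ℕ) : Type :=
  ∀ t : Set.Icc 2 N, Set.Icc 1 ((t : ℕ) - 1)

noncomputable instance (N : ℕ) : Fintype (ParentSeq N) := by
  unfold ParentSeq
  classical
  infer_instance

/-- The value of a parent sequence at `j` (junk value `0` outside `{2,…,N}`). -/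
def pval {N : ℕ} (f : ParentSeq N) (j : ℕ) : ℕ :=
  if h : 2 ≤ j ∧ j ≤ N then (f ⟨j, Set.mem_Icc.mpr h⟩ : ℕ) else 0

/-- The degree `d_t(v_i)` of vertex `i` at time `t` in the tree determined by `f`. -/
def deg {N : ℕ} (f : ParentSeq N) (t i : ℕ) : ℕ :=
  ((Finset.Icc 2 t).filter (fun j => pval f j = i)).card + (if 2 ≤ i then 1 else 0)

/-- The Móri probability of the parent sequence `f`. -/
noncomputable def moriP {N : ℕ} (β : ℝ) (f : ParentSeq N) : ℝ :=
  ∏ t ∈ Finset.Icc 2 N, ((deg f (t - 1) (pval f t) : ℝ) + β) / ((2 + β) * ((t : ℝ) - 1) - 2)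

/-- Expectation of `X` under the Móri measure on parent sequences of length `N`. -/
noncomputable def moriE (N : ℕ) (β : ℝ) (X : ParentSeq N → ℝ) : ℝ :=
  ∑ f : ParentSeq N, moriP β f * X f

open Classical in
/-- Probability of an event under the Móri measure on parent sequences of length `N`. -/
noncomputable def moriPr (N : ℕ) (β : ℝ) (p : ParentSeq N → Prop) : ℝ :=
  ∑ f : ParentSeq N, if p f then moriP β f else 0

/-- The index of the merged vertex containing tree vertex `t` when merging in blocks of `m`. -/
def blk (m t : ℕ) : ℕ := (t - 1) / m + 1

/-- The number `m(a,b)` of edges joining `u_a` and `u_b` in the Móri graph `G^n_{m,β}`. -/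
def mult (n m : ℕ) (f : ParentSeq (n * m)) (a b : ℕ) : ℕ :=
  ((Finset.Icc 2 (n * m)).filter (fun t =>
    (blk m t = a ∧ blk m (pval f t) = b) ∨ (blk m t = b ∧ blk m (pval f t) = a))).card

/-- The degree `d(u_i)` of the merged vertex `u_i` in the Móri graph `G^n_{m,β}`
(a loop contributes `2`). -/
def degU (n m : ℕ) (f : ParentSeq (n * m)) (i : ℕ) : ℕ :=
  ((Finset.Icc 2 (n * m)).filter (fun t => blk m t = i)).card +
  ((Finset.Icc 2 (n * m)).filter (fun t => blk m (pval f t) = i)).card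

/-!
Work in the tree on `N = n * m` vertices. Call a tree vertex a *loop vertex* if its out-edge becomes
a loop after merging; the root, which has no out-edge, counts as one too. Each block `b` has `m`
vertices, so `m` minus its number of loop vertices is its number of edges to the left. Multiplying
by the number `r b` of edges to the right of `b` and summing over `b` gives the exact identity
`#pairs = m² n - ∑ (m + r (blk s))`, the sum being over the loop vertices `s`.

The defect is at most a constant times the sum of the weights of the blocks of the loop vertices,
the weight of a block being the sum of its `degree + β`. In one step the expected weight of a block
is multiplied by at most `1 + 1 / A`, where `A = (2 + β) N - 2` is the total weight, and a new loop
vertex contributes `O(1 / A)` in expectation since the block under construction has bounded weight.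
Hence the expected defect is `O(∏ (1 + 1 / A)) = O(N ^ (1 / (2 + β)))`.
-/

open Filter Asymptotics

section Growth

theorem one_add_div_le_div_sub_one_rpow {g x : ℝ} (hg : 0 ≤ g) (hx : 1 < x) :
    1 + g / x ≤ (x / (x - 1)) ^ g := by
  have hexp : Real.exp (1 / x) ≤ x / (x - 1) := by
    have h : 1 - 1 / x ≤ Real.exp (-(1 / x)) := Real.one_sub_le_exp_neg _
    rw [Real.exp_neg, le_inv_comm₀ (by rw [sub_pos, div_lt_one] <;> linarith) (Real.exp_pos _)] at h
    rwa [one_sub_div (by positivity), inv_div] at h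
  calc 1 + g / x ≤ Real.exp (g / x) := by linarith [Real.add_one_le_exp (g / x)]
    _ = Real.exp (1 / x) ^ g := by rw [← Real.exp_mul]; ring_nf
    _ ≤ (x / (x - 1)) ^ g := Real.rpow_le_rpow (Real.exp_pos _).le hexp hg

theorem isBigO_rpow_of_le_one_add_div_mul {g c : ℝ} (hg : 0 ≤ g) (hc : 0 ≤ c) {a : ℕ → ℝ}
    (ha : ∀ N, 0 ≤ a N) (hstep : ∀ᶠ N : ℕ in atTop, a (N + 1) ≤ (1 + g / (N - c)) * a N) :
    a =O[atTop] fun N => (N : ℝ) ^ g := by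
  have hlarge : ∀ᶠ N : ℕ in atTop, c + 1 < N := tendsto_natCast_atTop_atTop.eventually_gt_atTop _
  obtain ⟨N₀, hN₀⟩ := eventually_atTop.1 (hstep.and hlarge)
  set K : ℝ := a N₀ / (N₀ - c - 1) ^ g
  have hK : ∀ N ≥ N₀, a N ≤ K * (N - c - 1) ^ g := by
    intro N hN
    induction N, hN using Nat.le_induction with
    | base =>
      have : 0 < (N₀ : ℝ) - c - 1 := by linarith [(hN₀ N₀ le_rfl).2]
      exact (div_mul_cancel₀ _ (by positivity)).ge
    | succ N hN ih =>
      obtain ⟨hstepN, hlargeN⟩ := hN₀ N hN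
      have hx : 1 < (N : ℝ) - c := by linarith
      calc a (N + 1) ≤ (1 + g / (N - c)) * a N := hstepN
        _ ≤ ((N - c) / (N - c - 1)) ^ g * (K * (N - c - 1) ^ g) :=
          mul_le_mul (one_add_div_le_div_sub_one_rpow hg hx) ih (ha N)
            (Real.rpow_nonneg (div_nonneg (by linarith) (by linarith)) _)
        _ = K * (((N - c) / (N - c - 1)) * (N - c - 1)) ^ g := by
          rw [Real.mul_rpow (div_nonneg (by linarith) (by linarith)) (by linarith)]
          ring
        _ = K * ((N + 1 : ℕ) - c - 1) ^ g := by
          rw [div_mul_cancel₀ _ (by linarith)]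
          push_cast
          ring_nf
  refine .of_bound K (eventually_atTop.2 ⟨N₀, fun N hN => ?_⟩)
  have hN₀' := (hN₀ N₀ le_rfl).2
  have hN' := (hN₀ N hN).2
  have hK0 : 0 ≤ K := div_nonneg (ha _) (Real.rpow_nonneg (by linarith) _)
  rw [Real.norm_of_nonneg (ha N), Real.norm_of_nonneg (by positivity)]
  exact (hK N hN).trans (mul_le_mul_of_nonneg_left
    (Real.rpow_le_rpow (by linarith) (by linarith) hg) hK0)

end Growth

variable {N : ℕ}

namespace ParentSeq

theorem pval_mem_Ico (f : ParentSeq N) {j : ℕ} (hj : j ∈ Icc 2 N) : pval f j ∈ Ico 1 j := by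
  rw [mem_Icc] at hj
  have := (f ⟨j, Set.mem_Icc.2 hj⟩).2
  simp only [Set.mem_Icc] at this
  simp only [pval, hj, and_self, dite_true, mem_Ico]
  omega

theorem pval_le (f : ParentSeq N) (j : ℕ) : pval f j ≤ j := by
  by_cases hj : j ∈ Icc 2 N
  · exact (mem_Ico.1 (f.pval_mem_Ico hj)).2.le
  · simp [pval, ← mem_Icc, hj]

/-- The parent sequence of length `N + 1` obtained from `f` by letting `i` be the parent of the new
vertex `N + 1`. -/
def snoc (f : ParentSeq N) (i : Set.Icc 1 N) : ParentSeq (N + 1) := fun t =>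
  if h : (t : ℕ) ≤ N then f ⟨t, t.2.1, h⟩
  else ⟨i, i.2.1, i.2.2.trans (Nat.le_sub_one_of_lt (not_le.1 h))⟩

/-- A parent sequence of length `N + 1` is a parent sequence of length `N` together with the parent
of the vertex `N + 1`. -/
def snocEquiv (hN : 1 ≤ N) : ParentSeq N × Set.Icc 1 N ≃ ParentSeq (N + 1) where
  toFun x := x.1.snoc x.2
  invFun f := (fun t => f ⟨t, t.2.1, t.2.2.trans N.le_succ⟩, f ⟨N + 1, by omega, le_rfl⟩)
  left_inv := by
    rintro ⟨f, i⟩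
    refine Prod.ext (funext fun t => ?_) (Subtype.ext ?_)
    · exact dif_pos t.2.2
    · simp [snoc]
  right_inv f := by
    funext ⟨t, ht⟩
    obtain h | rfl : t ≤ N ∨ t = N + 1 := Nat.le_or_eq_of_le_succ ht.2
    · exact dif_pos h
    · exact Subtype.ext (by simp [snoc])

theorem pval_snoc_of_le (f : ParentSeq N) (i : Set.Icc 1 N) {j : ℕ} (hj : j ≤ N) :
    pval (f.snoc i) j = pval f j := by
  simp [pval, snoc, hj, hj.trans N.le_succ]

theorem pval_snoc_last (f : ParentSeq N) (i : Set.Icc 1 N) : pval (f.snoc i) (N + 1) = i := by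
  simp [pval, snoc, i.2.1.trans i.2.2]

theorem deg_snoc_of_le (f : ParentSeq N) (i : Set.Icc 1 N) {t : ℕ} (ht : t ≤ N) (k : ℕ) :
    deg (f.snoc i) t k = deg f t k := by
  have h : {j ∈ Icc 2 t | pval (f.snoc i) j = k} = {j ∈ Icc 2 t | pval f j = k} :=
    filter_congr fun j hj => by rw [f.pval_snoc_of_le i ((mem_Icc.1 hj).2.trans ht)]
  simp only [deg, h]

theorem deg_snoc_last (f : ParentSeq N) (i : Set.Icc 1 N) (k : ℕ) :
    deg (f.snoc i) (N + 1) k = deg f N k + if (i : ℕ) = k then 1 else 0 := by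
  have hN : 2 ≤ N + 1 := Nat.succ_le_succ (i.2.1.trans i.2.2)
  rw [← f.deg_snoc_of_le i le_rfl, deg, ← insert_Icc_right_eq_Icc_add_one hN, filter_insert,
    f.pval_snoc_last i, deg]
  split_ifs <;> simp +arith

theorem sum_deg (f : ParentSeq N) : ∑ i ∈ Icc 1 N, deg f N i = 2 * (N - 1) := by
  have hmaps : Set.MapsTo (pval f) (Icc 2 N) (Icc 1 N) := fun j hj => by
    have hlt := mem_Ico.1 (f.pval_mem_Ico hj)
    have hj' := mem_Icc.1 hj
    exact mem_Icc.2 ⟨hlt.1, by omega⟩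
  have hnonroot : {i ∈ Icc 1 N | 2 ≤ i} = Icc 2 N := by ext; simp; omega
  simp only [deg]
  rw [sum_add_distrib, ← card_eq_sum_card_fiberwise hmaps, ← card_filter, hnonroot, Nat.card_Icc]
  omega

end ParentSeq

section MoriMeasure

variable {β : ℝ}

/-- The sum of `degree + β` over the vertices of a tree on `N ≥ 1` vertices, i.e. the denominator
of the attachment probabilities of vertex `N + 1`. -/
noncomputable def totalWeight (β : ℝ) (N : ℕ) : ℝ := (2 + β) * N - 2

/-- The Móri probability that vertex `N + 1` attaches to vertex `i` in the tree of `f`. -/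
noncomputable def attachProb (β : ℝ) (f : ParentSeq N) (i : ℕ) : ℝ :=
  (deg f N i + β) / totalWeight β N

/-- The conditional Móri expectation of a functional `X` of the first `N + 1` vertices, given the
tree `f` on the first `N` vertices. -/
noncomputable def attachE (β : ℝ) (f : ParentSeq N) (X : ParentSeq (N + 1) → ℝ) : ℝ :=
  ∑ i : Set.Icc 1 N, attachProb β f i * X (f.snoc i)

theorem totalWeight_pos (hβ : 0 < β) (hN : 1 ≤ N) : 0 < totalWeight β N := by
  have : (1 : ℝ) ≤ N := by exact_mod_cast hN
  unfold totalWeight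
  nlinarith

theorem sum_deg_add (hN : 1 ≤ N) (f : ParentSeq N) :
    ∑ i ∈ Icc 1 N, ((deg f N i : ℝ) + β) = totalWeight β N := by
  rw [sum_add_distrib, ← Nat.cast_sum, f.sum_deg, sum_const, Nat.card_Icc, totalWeight]
  push_cast [hN]
  rw [nsmul_eq_mul]
  ring

theorem attachProb_nonneg (hβ : 0 < β) (hN : 1 ≤ N) (f : ParentSeq N) (i : ℕ) :
    0 ≤ attachProb β f i :=
  div_nonneg (by positivity) (totalWeight_pos hβ hN).le

theorem sum_attachProb (hβ : 0 < β) (hN : 1 ≤ N) (f : ParentSeq N) :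
    ∑ i : Set.Icc 1 N, attachProb β f i = 1 := by
  rw [sum_set_coe (Set.Icc 1 N) (f := fun i => attachProb β f i), Set.toFinset_Icc]
  simp only [attachProb]
  rw [← sum_div, sum_deg_add hN, div_self (totalWeight_pos hβ hN).ne']

theorem moriP_snoc (f : ParentSeq N) (i : Set.Icc 1 N) :
    moriP β (f.snoc i) = moriP β f * attachProb β f i := by
  have hN : 2 ≤ N + 1 := Nat.succ_le_succ (i.2.1.trans i.2.2)
  rw [moriP, ← insert_Icc_right_eq_Icc_add_one hN, prod_insert (by simp), mul_comm, moriP]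
  congr 1
  · refine prod_congr rfl fun t ht => ?_
    have ht : t ≤ N := (mem_Icc.1 ht).2
    rw [f.pval_snoc_of_le i ht, f.deg_snoc_of_le i ((t.sub_le 1).trans ht)]
  · rw [f.pval_snoc_last, f.deg_snoc_of_le i (by simp), attachProb, totalWeight]
    simp

theorem moriE_succ (hN : 1 ≤ N) (X : ParentSeq (N + 1) → ℝ) :
    moriE (N + 1) β X = moriE N β fun f => attachE β f X := by
  simp only [moriE, attachE, mul_sum]
  rw [← (ParentSeq.snocEquiv hN).sum_comp, Fintype.sum_prod_type]
  refine sum_congr rfl fun f _ => sum_congr rfl fun i _ => ?_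
  change moriP β (f.snoc i) * X (f.snoc i) = _
  rw [moriP_snoc, mul_assoc]

theorem moriP_nonneg (hβ : 0 < β) (f : ParentSeq N) : 0 ≤ moriP β f := by
  refine prod_nonneg fun t ht => div_nonneg (by positivity) ?_
  have ht : 2 ≤ t := (mem_Icc.1 ht).1
  have := totalWeight_pos hβ (N := t - 1) (by omega)
  rw [totalWeight, Nat.cast_pred (by omega)] at this
  exact this.le

theorem moriE_const_mul (c : ℝ) (X : ParentSeq N → ℝ) :
    moriE N β (fun f => c * X f) = c * moriE N β X := by
  simp only [moriE, mul_sum, mul_left_comm]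

theorem moriE_mono (hβ : 0 < β) {X Y : ParentSeq N → ℝ} (h : ∀ f, X f ≤ Y f) :
    moriE N β X ≤ moriE N β Y :=
  sum_le_sum fun f _ => mul_le_mul_of_nonneg_left (h f) (moriP_nonneg hβ f)

theorem moriE_nonneg (hβ : 0 < β) {X : ParentSeq N → ℝ} (h : ∀ f, 0 ≤ X f) : 0 ≤ moriE N β X :=
  sum_nonneg fun f _ => mul_nonneg (moriP_nonneg hβ f) (h f)

theorem sum_moriP (hβ : 0 < β) (hN : 1 ≤ N) : ∑ f : ParentSeq N, moriP β f = 1 := by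
  suffices moriE N β (fun _ => 1) = 1 by simpa [moriE] using this
  induction N, hN using Nat.le_induction with
  | base =>
    have : IsEmpty (Set.Icc 2 1) := ⟨fun t => absurd (t.2.1.trans t.2.2) (by norm_num)⟩
    have : Unique (ParentSeq 1) := Pi.uniqueOfIsEmpty _
    simp [moriE, moriP]
  | succ N hN ih => simpa [moriE_succ hN, attachE, sum_attachProb hβ hN] using ih

theorem abs_moriE_sub_le (hβ : 0 < β) (hN : 1 ≤ N) {X Y : ParentSeq N → ℝ} {c : ℝ}
    (h : ∀ f, |X f - c| ≤ Y f) : |moriE N β X - c| ≤ moriE N β Y := by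
  have hsub : moriE N β X - c = ∑ f, moriP β f * (X f - c) := by
    simp only [moriE, mul_sub, sum_sub_distrib, ← sum_mul, sum_moriP hβ hN, one_mul]
  rw [hsub]
  refine (abs_sum_le_sum_abs _ _).trans (sum_le_sum fun f _ => ?_)
  rw [abs_mul, abs_of_nonneg (moriP_nonneg hβ f)]
  exact mul_le_mul_of_nonneg_left (h f) (moriP_nonneg hβ f)

theorem isBigO_moriE_of_attachE_le (hβ : 0 < β) {Y : ∀ N, ParentSeq N → ℝ}
    (hY : ∀ N f, 0 ≤ Y N f)
    (hstep : ∀ N, 1 ≤ N → ∀ f, attachE β f (Y (N + 1)) ≤ (1 + 1 / totalWeight β N) * Y N f) :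
    (fun N => moriE N β (Y N)) =O[atTop] fun N => (N : ℝ) ^ (1 / (2 + β)) := by
  refine isBigO_rpow_of_le_one_add_div_mul (c := 2 / (2 + β)) (by positivity) (by positivity)
    (fun N => moriE_nonneg hβ (hY N)) ((eventually_ge_atTop 1).mono fun N hN => ?_)
  have hratio : 1 / (2 + β) / (N - 2 / (2 + β)) = 1 / totalWeight β N := by
    rw [totalWeight, div_div, mul_sub, mul_div_cancel₀ _ (by positivity)]
  rw [hratio, moriE_succ hN, ← moriE_const_mul]
  exact moriE_mono hβ (hstep N hN)

end MoriMeasure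

section Blocks

variable {m : ℕ}

theorem one_le_blk (m t : ℕ) : 1 ≤ blk m t := Nat.le_add_left _ _

theorem blk_mono (m : ℕ) : Monotone (blk m) := fun _ _ h =>
  Nat.add_le_add_right (Nat.div_le_div_right (Nat.sub_le_sub_right h 1)) 1

theorem blk_mem_Icc {n t : ℕ} (ht : t ∈ Icc 1 (n * m)) : blk m t ∈ Icc 1 n := by
  rw [mem_Icc] at ht
  exact mem_Icc.2 ⟨one_le_blk m t,
    Nat.div_lt_of_lt_mul (Nat.sub_one_lt_of_le ht.1 (ht.2.trans_eq (mul_comm n m)))⟩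

/-- The tree vertices merged into `u_b`, for `b ≥ 1`. -/
def block (m b : ℕ) : Finset ℕ := Ioc ((b - 1) * m) (b * m)

theorem mem_block (hm : 1 ≤ m) {b i : ℕ} : i ∈ block m b ↔ 1 ≤ i ∧ blk m i = b := by
  cases b with
  | zero => simp [block, blk]
  | succ c =>
    rw [block, blk, mem_Ioc, Nat.add_right_cancel_iff, Nat.div_eq_iff (by omega),
      Nat.add_sub_cancel, Nat.succ_mul]
    omega

theorem card_block {b : ℕ} (hb : 1 ≤ b) : #(block m b) = m := by
  obtain ⟨c, rfl⟩ := Nat.exists_eq_add_of_le' hb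
  rw [block, Nat.card_Ioc, Nat.add_sub_cancel, Nat.succ_mul, Nat.add_sub_cancel_left]

theorem blk_pval_le (m : ℕ) (f : ParentSeq N) (t : ℕ) : blk m (pval f t) ≤ blk m t :=
  blk_mono m (f.pval_le t)

theorem two_le_of_blk_pval_lt {f : ParentSeq N} {t : ℕ} (h : blk m (pval f t) < blk m t) :
    2 ≤ t := by
  by_contra! ht
  have hblk : blk m t = 1 := by simp [blk, Nat.sub_eq_zero_of_le (Nat.le_of_lt_succ ht)]
  exact (one_le_blk m _).not_gt (hblk ▸ h)

end Blocks

section Counting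

variable {m n : ℕ}

/-- The tree vertices whose edge to the parent becomes a loop after merging. The root is included:
its junk parent `0` has the same `blk` as the vertex `1`. -/
def loopVertices (m : ℕ) (f : ParentSeq N) : Finset ℕ :=
  {t ∈ Icc 1 N | blk m (pval f t) = blk m t}

/-- The number of edges from `u_b` to merged vertices of smaller index. -/
def leftDeg (m : ℕ) (f : ParentSeq N) (b : ℕ) : ℕ :=
  #{t ∈ Icc 1 N | blk m (pval f t) < blk m t ∧ blk m t = b}

/-- The number of edges from `u_b` to merged vertices of larger index. -/
def rightDeg (m : ℕ) (f : ParentSeq N) (b : ℕ) : ℕ :=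
  #{t ∈ Icc 1 N | blk m (pval f t) < blk m t ∧ blk m (pval f t) = b}

theorem mult_of_lt (f : ParentSeq (n * m)) {a b : ℕ} (hab : a < b) :
    mult n m f a b =
      #{t ∈ Icc 1 (n * m) | blk m (pval f t) < blk m t ∧ blk m t = b ∧ blk m (pval f t) = a} := by
  rw [mult]
  congr 1
  ext t
  have hle := blk_pval_le m f t
  have htwo := two_le_of_blk_pval_lt (m := m) (f := f) (t := t)
  simp only [mem_filter, mem_Icc]
  omega

theorem sum_mult_left (f : ParentSeq (n * m)) (b : ℕ) :
    ∑ a ∈ Ico 1 b, mult n m f a b = leftDeg m f b := by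
  rw [leftDeg, card_eq_sum_card_fiberwise (f := fun t => blk m (pval f t)) (t := Ico 1 b)]
  · refine sum_congr rfl fun a ha => ?_
    simp only [mult_of_lt f (mem_Ico.1 ha).2, filter_filter, and_assoc]
  · intro t ht
    obtain ⟨-, hlt, rfl⟩ := mem_filter.1 ht
    exact mem_Ico.2 ⟨one_le_blk m _, hlt⟩

theorem sum_mult_right (f : ParentSeq (n * m)) (b : ℕ) :
    ∑ c ∈ Ioc b n, mult n m f b c = rightDeg m f b := by
  rw [rightDeg, card_eq_sum_card_fiberwise (f := blk m) (t := Ioc b n)]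
  · refine sum_congr rfl fun c hc => ?_
    simp only [mult_of_lt f (mem_Ioc.1 hc).1, filter_filter, and_assoc, and_comm (a := _ = c)]
  · intro t ht
    obtain ⟨htN, hlt, rfl⟩ := mem_filter.1 ht
    exact mem_Ioc.2 ⟨hlt, (mem_Icc.1 (blk_mem_Icc htN)).2⟩

theorem sum_mult_mul_mult (f : ParentSeq (n * m)) :
    ∑ a ∈ Icc 1 n, ∑ b ∈ Ioc a n, ∑ c ∈ Ioc b n, mult n m f a b * mult n m f b c =
      ∑ b ∈ Icc 1 n, leftDeg m f b * rightDeg m f b := by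
  rw [sum_comm' (t' := Icc 1 n) (s' := fun b => Ico 1 b)
    (by intro a b; simp only [mem_Icc, mem_Ioc, mem_Ico]; omega)]
  simp only [← sum_mul_sum, sum_mult_left, sum_mult_right]

theorem leftDeg_add_card_loopVertices (hm : 1 ≤ m) (f : ParentSeq (n * m)) {b : ℕ}
    (hb : b ∈ Icc 1 n) : leftDeg m f b + #{s ∈ loopVertices m f | blk m s = b} = m := by
  obtain ⟨hb, hbn⟩ := mem_Icc.1 hb
  have hmem : ∀ t, t ∈ block m b ↔ t ∈ Icc 1 (n * m) ∧ blk m t = b := fun t => by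
    have hle : t ∈ block m b → t ≤ n * m := fun ht =>
      (mem_Ioc.1 ht).2.trans (Nat.mul_le_mul_right m hbn)
    rw [mem_block hm] at hle ⊢
    simp only [mem_Icc]
    tauto
  have hleft : leftDeg m f b = #{t ∈ block m b | blk m (pval f t) ≠ blk m t} := by
    rw [leftDeg]
    congr 1
    ext t
    simp only [mem_filter, hmem, (blk_pval_le m f t).lt_iff_ne]
    tauto
  have hloop : {s ∈ loopVertices m f | blk m s = b} =
      {t ∈ block m b | blk m (pval f t) = blk m t} := by
    ext t
    simp only [loopVertices, mem_filter, hmem]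
    tauto
  rw [hleft, hloop, add_comm, card_filter_add_card_filter_not, card_block hb]

theorem sum_rightDeg_add_card_loopVertices (f : ParentSeq (n * m)) :
    ∑ b ∈ Icc 1 n, rightDeg m f b + #(loopVertices m f) = n * m := by
  have hright : ∑ b ∈ Icc 1 n, rightDeg m f b =
      #{t ∈ Icc 1 (n * m) | ¬ blk m (pval f t) = blk m t} := by
    rw [card_eq_sum_card_fiberwise (f := fun t => blk m (pval f t)) (t := Icc 1 n)]
    · refine sum_congr rfl fun b _ => ?_
      rw [rightDeg, filter_filter]
      simp only [(blk_pval_le m f _).lt_iff_ne, ne_eq]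
    · intro t ht
      have hle := (mem_Icc.1 (blk_mem_Icc (mem_filter.1 ht).1)).2
      exact mem_Icc.2 ⟨one_le_blk m _, (blk_pval_le m f t).trans hle⟩
  rw [hright, loopVertices, add_comm, card_filter_add_card_filter_not, Nat.card_Icc,
    Nat.add_sub_cancel]

theorem sum_mult_mul_mult_add_sum_loopVertices (hm : 1 ≤ m) (f : ParentSeq (n * m)) :
    ∑ a ∈ Icc 1 n, ∑ b ∈ Ioc a n, ∑ c ∈ Ioc b n, mult n m f a b * mult n m f b c +
      ∑ s ∈ loopVertices m f, (m + rightDeg m f (blk m s)) = m ^ 2 * n := by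
  have hfiber : ∑ s ∈ loopVertices m f, rightDeg m f (blk m s) =
      ∑ b ∈ Icc 1 n, #{s ∈ loopVertices m f | blk m s = b} * rightDeg m f b := by
    rw [← sum_fiberwise_of_maps_to' (s := loopVertices m f) (t := Icc 1 n) (g := blk m)
      (fun s hs => blk_mem_Icc (mem_filter.1 hs).1) (rightDeg m f)]
    simp only [sum_const, smul_eq_mul]
  calc _ = ∑ b ∈ Icc 1 n, (leftDeg m f b + #{s ∈ loopVertices m f | blk m s = b}) *
          rightDeg m f b + m * #(loopVertices m f) := by
        simp only [sum_mult_mul_mult, sum_add_distrib, hfiber, sum_const, smul_eq_mul, add_mul]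
        ring
    _ = m * (∑ b ∈ Icc 1 n, rightDeg m f b + #(loopVertices m f)) := by
        rw [mul_add, mul_sum]
        congr 1
        exact sum_congr rfl fun b hb => by rw [leftDeg_add_card_loopVertices hm f hb]
    _ = m ^ 2 * n := by
        rw [sum_rightDeg_add_card_loopVertices]
        ring

end Counting

section Weights

variable {m : ℕ} {β : ℝ}

/-- The sum of `degree + β` over the tree vertices merged into `u_b`. The sum runs over the whole
block, in which vertices not yet born have degree `1`, so that the birth of a vertex does not change
the weight of its block. -/
noncomputable def blockWeight (m : ℕ) (β : ℝ) (f : ParentSeq N) (b : ℕ) : ℝ :=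
  ∑ i ∈ block m b, ((deg f N i : ℝ) + β)

/-- The sum, over the loop vertices, of the weight of their block: the potential that controls the
number of missing adjacent pairs. -/
noncomputable def loopWeight (m : ℕ) (β : ℝ) (f : ParentSeq N) : ℝ :=
  ∑ s ∈ loopVertices m f, blockWeight m β f (blk m s)

theorem blockWeight_eq (hm : 1 ≤ m) (f : ParentSeq N) {b : ℕ} (hb : 1 ≤ b) :
    blockWeight m β f b =
      #{j ∈ Icc 2 N | blk m (pval f j) = b} + #{i ∈ block m b | 2 ≤ i} + m * β := by
  have hmaps : Set.MapsTo (pval f) ({j ∈ Icc 2 N | blk m (pval f j) = b} : Finset ℕ)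
      (block m b) := fun j hj => by
    obtain ⟨hjN, hjb⟩ := mem_filter.1 hj
    exact (mem_block hm).2 ⟨(mem_Ico.1 (f.pval_mem_Ico hjN)).1, hjb⟩
  have hfiber : ∀ i ∈ block m b, {j ∈ Icc 2 N | blk m (pval f j) = b ∧ pval f j = i} =
      {j ∈ Icc 2 N | pval f j = i} := fun i hi => filter_congr fun j _ =>
    and_iff_right_of_imp fun h => by rw [h, ((mem_block hm).1 hi).2]
  rw [card_eq_sum_card_fiberwise hmaps, card_filter]
  simp only [filter_filter]
  rw [sum_congr rfl fun i hi => by rw [hfiber i hi], ← Nat.cast_add, ← sum_add_distrib, blockWeight,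
    sum_add_distrib, sum_const, card_block hb, nsmul_eq_mul, ← Nat.cast_sum]
  rfl

theorem card_add_le_blockWeight (hm : 1 ≤ m) (f : ParentSeq N) {b : ℕ} (hb : 1 ≤ b) :
    #{j ∈ Icc 2 N | blk m (pval f j) = b} + m * β ≤ blockWeight m β f b := by
  rw [blockWeight_eq hm f hb]
  gcongr
  exact le_add_of_nonneg_right (Nat.cast_nonneg _)

theorem blockWeight_blk_last_le (hm : 1 ≤ m) (f : ParentSeq N) :
    blockWeight m β f (blk m (N + 1)) ≤ m * (2 + β) := by
  have hb := one_le_blk m (N + 1)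
  have hin : #{j ∈ Icc 2 N | blk m (pval f j) = blk m (N + 1)} ≤ m := by
    refine (card_le_card fun j hj => ?_).trans_eq (card_block hb)
    simp only [mem_filter, mem_Icc] at hj
    have hle := blk_pval_le m f j
    have hmono : blk m j ≤ blk m (N + 1) := blk_mono m (hj.1.2.trans N.le_succ)
    exact (mem_block hm).2 (by omega)
  have hnonroot : #{i ∈ block m (blk m (N + 1)) | 2 ≤ i} ≤ m :=
    (card_filter_le _ _).trans_eq (card_block hb)
  rw [blockWeight_eq hm f hb]
  rw [← Nat.cast_le (α := ℝ)] at hin hnonroot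
  linarith

theorem blockWeight_nonneg (hβ : 0 ≤ β) (f : ParentSeq N) (b : ℕ) : 0 ≤ blockWeight m β f b :=
  sum_nonneg fun _ _ => by positivity

theorem loopWeight_nonneg (hβ : 0 ≤ β) (f : ParentSeq N) : 0 ≤ loopWeight m β f :=
  sum_nonneg fun _ _ => blockWeight_nonneg hβ f _

theorem blockWeight_snoc (hm : 1 ≤ m) (f : ParentSeq N) (i : Set.Icc 1 N) (b : ℕ) :
    blockWeight m β (f.snoc i) b = blockWeight m β f b + if blk m i = b then 1 else 0 := by
  have hmem : (i : ℕ) ∈ block m b ↔ blk m i = b := by simp [mem_block hm, i.2.1]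
  simp only [blockWeight, f.deg_snoc_last, Nat.cast_add, add_right_comm _ _ β, sum_add_distrib,
    Nat.cast_ite, Nat.cast_one, Nat.cast_zero, sum_ite_eq, hmem]

theorem loopVertices_snoc (f : ParentSeq N) (i : Set.Icc 1 N) :
    loopVertices m (f.snoc i) =
      if blk m i = blk m (N + 1) then insert (N + 1) (loopVertices m f) else loopVertices m f := by
  have hold : {t ∈ Icc 1 N | blk m (pval (f.snoc i) t) = blk m t} = loopVertices m f :=
    filter_congr fun t ht => by rw [f.pval_snoc_of_le i (mem_Icc.1 ht).2]
  rw [loopVertices, ← insert_Icc_right_eq_Icc_add_one (by omega), filter_insert, hold,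
    f.pval_snoc_last]

theorem loopWeight_snoc_le (hm : 1 ≤ m) (f : ParentSeq N) (i : Set.Icc 1 N) :
    loopWeight m β (f.snoc i) ≤ loopWeight m β f +
      ∑ s ∈ loopVertices m f, (if blk m i = blk m s then 1 else 0) +
      (m * (2 + β) + 1) * if blk m i = blk m (N + 1) then 1 else 0 := by
  have hlast := blockWeight_blk_last_le (β := β) hm f
  rw [loopWeight, loopWeight, ← sum_add_distrib, loopVertices_snoc]
  simp only [blockWeight_snoc hm]
  split_ifs with h
  · rw [sum_insert (by simp [loopVertices]), if_pos h]
    linarith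
  · simp

theorem attachProb_block_le (hm : 1 ≤ m) (hβ : 0 < β) (hN : 1 ≤ N) (f : ParentSeq N) (b : ℕ) :
    ∑ i : Set.Icc 1 N, attachProb β f i * (if blk m i = b then 1 else 0) ≤
      blockWeight m β f b / totalWeight β N := by
  rw [sum_set_coe (Set.Icc 1 N) (f := fun i => attachProb β f i * (if blk m i = b then 1 else 0)),
    Set.toFinset_Icc, blockWeight, sum_div]
  simp only [mul_ite, mul_one, mul_zero, ← sum_filter]
  refine sum_le_sum_of_subset_of_nonneg (fun i hi => ?_) fun i _ _ => attachProb_nonneg hβ hN f i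
  obtain ⟨hi, hib⟩ := mem_filter.1 hi
  exact (mem_block hm).2 ⟨(mem_Icc.1 hi).1, hib⟩

theorem attachE_loopWeight_add_sq_le (hm : 1 ≤ m) (hβ : 0 < β) (hN : 1 ≤ N) (f : ParentSeq N) :
    attachE β f (fun g => loopWeight m β g + (m * (2 + β) + 1) ^ 2) ≤
      (1 + 1 / totalWeight β N) * (loopWeight m β f + (m * (2 + β) + 1) ^ 2) := by
  set C : ℝ := m * (2 + β) + 1
  set A := totalWeight β N
  have hA : 0 < A := totalWeight_pos hβ hN
  have hlast : blockWeight m β f (blk m (N + 1)) ≤ C :=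
    (blockWeight_blk_last_le hm f).trans (le_add_of_nonneg_right zero_le_one)
  calc _ ≤ ∑ i : Set.Icc 1 N, attachProb β f i * (loopWeight m β f + C ^ 2 +
          ∑ s ∈ loopVertices m f, (if blk m i = blk m s then 1 else 0) +
          C * if blk m i = blk m (N + 1) then 1 else 0) := by
        refine sum_le_sum fun i _ => mul_le_mul_of_nonneg_left ?_ (attachProb_nonneg hβ hN f i)
        linarith [loopWeight_snoc_le (β := β) hm f i]
    _ = loopWeight m β f + C ^ 2 +
          ∑ s ∈ loopVertices m f,
            ∑ i : Set.Icc 1 N, attachProb β f i * (if blk m i = blk m s then 1 else 0) +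
          C * ∑ i : Set.Icc 1 N, attachProb β f i * if blk m i = blk m (N + 1) then 1 else 0 := by
        simp only [mul_add, sum_add_distrib, ← sum_mul, sum_attachProb hβ hN, one_mul, mul_sum,
          mul_left_comm _ C]
        rw [sum_comm]
    _ ≤ loopWeight m β f + C ^ 2 +
          ∑ s ∈ loopVertices m f, blockWeight m β f (blk m s) / A + C * (C / A) := by
        gcongr
        · exact attachProb_block_le hm hβ hN f _
        · exact (attachProb_block_le hm hβ hN f _).trans (by gcongr)
    _ = (1 + 1 / A) * (loopWeight m β f + C ^ 2) := by
        rw [← sum_div, ← loopWeight]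
        ring

theorem isBigO_moriE_loopWeight (hm : 1 ≤ m) (hβ : 0 < β) :
    (fun N => moriE N β (loopWeight m β)) =O[atTop] fun N => (N : ℝ) ^ (1 / (2 + β)) := by
  have hpotential := isBigO_moriE_of_attachE_le hβ
    (Y := fun _ f => loopWeight m β f + (m * (2 + β) + 1) ^ 2)
    (fun _ f => add_nonneg (loopWeight_nonneg hβ.le f) (sq_nonneg _))
    fun _ hN f => attachE_loopWeight_add_sq_le hm hβ hN f
  refine (IsBigO.of_norm_le fun N => ?_).trans hpotential
  rw [Real.norm_of_nonneg (moriE_nonneg hβ (loopWeight_nonneg hβ.le))]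
  exact moriE_mono hβ fun f => le_add_of_nonneg_right (sq_nonneg _)

theorem add_rightDeg_le (hm : 1 ≤ m) (hβ : 0 < β) (f : ParentSeq N) {b : ℕ} (hb : 1 ≤ b) :
    m + rightDeg m f b ≤ (1 + 1 / β) * blockWeight m β f b := by
  have hright : rightDeg m f b ≤ #{j ∈ Icc 2 N | blk m (pval f j) = b} := by
    refine card_le_card fun t ht => ?_
    obtain ⟨ht, hlt, htb⟩ := mem_filter.1 ht
    exact mem_filter.2 ⟨mem_Icc.2 ⟨two_le_of_blk_pval_lt hlt, (mem_Icc.1 ht).2⟩, htb⟩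
  have hweight := card_add_le_blockWeight (β := β) hm f hb
  rw [← Nat.cast_le (α := ℝ)] at hright
  have hm' : (m : ℝ) ≤ 1 / β * blockWeight m β f b := by
    rw [one_div, le_inv_mul_iff₀ hβ]
    linarith [(Nat.cast_nonneg _ : (0 : ℝ) ≤ #{j ∈ Icc 2 N | blk m (pval f j) = b})]
  have hmβ : 0 ≤ m * β := by positivity
  linarith

theorem abs_sum_mult_mul_mult_sub_le {n : ℕ} (hm : 1 ≤ m) (hβ : 0 < β) (f : ParentSeq (n * m)) :
    |∑ a ∈ Icc 1 n, ∑ b ∈ Ioc a n, ∑ c ∈ Ioc b n, (mult n m f a b : ℝ) * (mult n m f b c : ℝ)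
        - (m : ℝ) ^ 2 * n| ≤ (1 + 1 / β) * loopWeight m β f := by
  have hpairs := sum_mult_mul_mult_add_sum_loopVertices hm f
  rify at hpairs
  rw [← hpairs, sub_add_cancel_left, abs_neg, abs_of_nonneg (by positivity), loopWeight, mul_sum]
  exact sum_le_sum fun s _ => add_rightDeg_le hm hβ f (one_le_blk m s)

end Weights

theorem total_adjacent_pairs_middle_index_general (β : ℝ) (hβ : 0 < β) (m : ℕ) (hm : 1 ≤ m) :
    ∃ K : ℝ, 0 < K ∧ ∀ n : ℕ, 1 ≤ n →
      |moriE (n * m) β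
          (fun f => ∑ a ∈ Finset.Icc 1 n, ∑ b ∈ Finset.Ioc a n, ∑ c ∈ Finset.Ioc b n,
            (mult n m f a b : ℝ) * (mult n m f b c : ℝ))
        - (m : ℝ) ^ 2 * (n : ℝ)| ≤ K * (n : ℝ) ^ (1 / (2 + β)) := by
  obtain ⟨K, hK, hbound⟩ := bound_of_isBigO_nat_atTop (isBigO_moriE_loopWeight hm hβ)
  refine ⟨(1 + 1 / β) * (K * (m : ℝ) ^ (1 / (2 + β))), by positivity, fun n hn => ?_⟩
  have hN : 0 < n * m := Nat.mul_pos hn hm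
  calc _ ≤ moriE (n * m) β (fun f => (1 + 1 / β) * loopWeight m β f) :=
        abs_moriE_sub_le hβ hN fun f => abs_sum_mult_mul_mult_sub_le hm hβ f
    _ = (1 + 1 / β) * moriE (n * m) β (loopWeight m β) := moriE_const_mul _ _
    _ ≤ (1 + 1 / β) * (K * ((n * m : ℕ) : ℝ) ^ (1 / (2 + β))) := by
        gcongr
        have h := hbound (x := n * m) (Real.rpow_pos_of_pos (by exact_mod_cast hN) _).ne'
        rw [Real.norm_of_nonneg (Real.rpow_nonneg (Nat.cast_nonneg _) _)] at h
        exact (Real.le_norm_self _).trans h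
    _ = (1 + 1 / β) * (K * (m : ℝ) ^ (1 / (2 + β))) * (n : ℝ) ^ (1 / (2 + β)) := by
        rw [Nat.cast_mul, Real.mul_rpow (by positivity) (by positivity)]
        ring

/-- The total number of pairs of adjacent half-edges in `G^n_{m,β}` whose common vertex has
the middle index is `m²·n + O(n^{2/(2+β)})` in expectation. -/
theorem total_adjacent_pairs_middle_index (β : ℝ) (hβ : 0 < β) (m : ℕ) (hm : 1 ≤ m) :
    ∃ K : ℝ, 0 < K ∧ ∀ n : ℕ, 1 ≤ n →
      |moriE (n * m) β
          (fun f => ∑ a ∈ Finset.Icc 1 n, ∑ b ∈ Finset.Ioc a n, ∑ c ∈ Finset.Ioc b n,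
            (mult n m f a b : ℝ) * (mult n m f b c : ℝ))
        - (m : ℝ) ^ 2 * (n : ℝ)| ≤ K * (n : ℝ) ^ (2 / (2 + β)) := by
  obtain ⟨K, hK, hbound⟩ := total_adjacent_pairs_middle_index_general β hβ m hm
  refine ⟨K, hK, fun n hn => (hbound n hn).trans ?_⟩
  gcongr
  · exact_mod_cast hn
  · norm_num
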